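/- Let θ ∈ W be an involution; let n_s be the number of indices i with θ(eᵢ) = eᵢ, n_r the number of indices with θ(eᵢ) = −eᵢ, and 2k the number of indices with θ(eᵢ) ≠ ±eᵢ. Then the subgroup of W generated by the reflections s_α for imaginary roots α (those with θα = α) is isomorphic as an abstract group to ((Fin n_s → ZMod 2) ⋊ Perm(Fin n_s)) × (Fin k → ZMod 2), i.e. to W(B_{n_s}) × W(A₁)^k; and the subgroup generated by the reflections s_α for real roots α (those with θα = −α) is isomorphic to ((Fin n_r → ZMod 2) ⋊ Perm(Fin n_r)) × (Fin k → ZMod 2), i.e. to W(B_{n_r}) × W(A₁)^k. -/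

import Mathlib

open scoped RealInnerProductSpace

noncomputable section

/-- Euclidean space `ℝⁿ`. -/
abbrev EucB (n : ℕ) := EuclideanSpace ℝ (Fin n)

/-- The `i`-th standard basis vector of `ℝⁿ`. -/
def eB (n : ℕ) (i : Fin n) : EucB n := EuclideanSpace.single i (1 : ℝ)

/-- The root system `Δ` of type `Bₙ`:
`{±eᵢ ± eⱼ : i < j} ∪ {±eᵢ}`. -/
def DeltaB (n : ℕ) : Set (EucB n) :=
  {v | (∃ i j : Fin n, i < j ∧
          (v = eB n i + eB n j ∨ v = eB n i - eB n j ∨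
           v = -eB n i + eB n j ∨ v = -eB n i - eB n j)) ∨
        ∃ i : Fin n, v = eB n i ∨ v = -eB n i}

/-- The positive system `Δ⁺ = {eᵢ ± eⱼ : i < j} ∪ {eᵢ}`. -/
def DeltaBpos (n : ℕ) : Set (EucB n) :=
  {v | (∃ i j : Fin n, i < j ∧ (v = eB n i + eB n j ∨ v = eB n i - eB n j)) ∨
        ∃ i : Fin n, v = eB n i}

/-- The coroot `α∨ = 2α/⟪α,α⟫`. -/
def corootB (n : ℕ) (α : EucB n) : EucB n := (2 / ⟪α, α⟫) • α

/-- The linear functional `x ↦ ⟪x, α∨⟫`. -/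
def corootForm (n : ℕ) (α : EucB n) : Module.Dual ℝ (EucB n) where
  toFun x := ⟪x, corootB n α⟫
  map_add' x y := inner_add_left _ _ _
  map_smul' c x := by simpa using real_inner_smul_left x (corootB n α) c

/-- The reflection `s_α(x) = x − ⟪x, α∨⟫ α` as a linear automorphism of `ℝⁿ`
(for `α` a root, the branch condition `⟪α, α∨⟫ = 2` holds). -/
def sReflB (n : ℕ) (α : EucB n) : EucB n ≃ₗ[ℝ] EucB n :=
  if h : corootForm n α α = 2 then Module.reflection h else LinearEquiv.refl ℝ (EucB n)

/-- The Weyl group `W(Bₙ)`, the subgroup of linear automorphisms of `ℝⁿ` generated by the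
reflections in the roots of `Δ`. -/
def WeylB (n : ℕ) : Subgroup (EucB n ≃ₗ[ℝ] EucB n) :=
  Subgroup.closure {g | ∃ α ∈ DeltaB n, g = sReflB n α}


end

open Multiplicative

/-- The permutation action of `Equiv.Perm (Fin m)` on `Multiplicative (Fin m → ZMod 2)`,
permuting coordinates; used to realize the hyperoctahedral group `W(B_m)` as
`(Fin m → ZMod 2) ⋊ Perm (Fin m)`. -/
def permAction (m : ℕ) :
    Equiv.Perm (Fin m) →* MulAut (Multiplicative (Fin m → ZMod 2)) where
  toFun σ :=
    { toFun := fun b => Multiplicative.ofAdd (fun i => Multiplicative.toAdd b (σ⁻¹ i))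
      invFun := fun b => Multiplicative.ofAdd (fun i => Multiplicative.toAdd b (σ i))
      left_inv := by
        intro b
        simp
      right_inv := by
        intro b
        simp
      map_mul' := by
        intro a b
        rfl }
  map_one' := by
    apply MulEquiv.ext
    intro b
    simp
  map_mul' := by
    intro σ τ
    apply MulEquiv.ext
    intro b
    simp [mul_inv_rev, Equiv.Perm.mul_apply]


section HelperLemmas

lemma eB_apply (n : ℕ) (i j : Fin n) : eB n i j = if j = i then 1 else 0 := by
  simp [eB]

lemma sReflB_apply_of (n : ℕ) (α x : EucB n) (h : α ≠ 0) :
    sReflB n α x = x - (2 / ⟪α, α⟫ * ⟪x, α⟫) • α := by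
  have h2 : ⟪α, α⟫ ≠ 0 := by simpa using h
  have h1 : corootForm n α α = 2 := by
    change ⟪α, corootB n α⟫ = 2
    rw [corootB, real_inner_smul_right]; field_simp
  rw [sReflB, dif_pos h1, Module.reflection_apply]
  change x - ⟪x, corootB n α⟫ • α = _
  rw [corootB, real_inner_smul_right]

lemma sReflB_invol (n : ℕ) (α : EucB n) : (sReflB n α)⁻¹ = sReflB n α := by
  rw [inv_eq_iff_mul_eq_one]
  unfold sReflB
  split_ifs with h
  · ext1 x
    exact Module.involutive_reflection h x
  · rfl

lemma inner_eB (n : ℕ) (x : EucB n) (i : Fin n) : ⟪x, eB n i⟫ = x i := by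
  simp [eB, EuclideanSpace.inner_single_right]

lemma sReflB_short (n : ℕ) (i : Fin n) (s : ℝ) (hs : s = 1 ∨ s = -1) (x : EucB n) :
    sReflB n (s • eB n i) x = x - (2 * x i) • eB n i := by
  have h0 : eB n i ≠ 0 := by
    intro h; have := congrArg (fun v : EucB n => v i) h; simp [eB_apply] at this
  rw [sReflB_apply_of]
  · simp only [real_inner_smul_right, real_inner_smul_left, inner_eB, smul_smul, eB_apply]
    rcases hs with rfl | rfl <;> simp
  · rcases hs with rfl | rfl <;> simpa using h0

lemma sReflB_long (n : ℕ) (i j : Fin n) (hij : i ≠ j) (s r : ℝ) (hs : s = 1 ∨ s = -1)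
    (hr : r = 1 ∨ r = -1) (x : EucB n) :
    sReflB n (s • eB n i + r • eB n j) x =
      x - (s * x i + r * x j) • (s • eB n i + r • eB n j) := by
  have hji := hij.symm
  rw [sReflB_apply_of]
  · simp only [inner_add_right, inner_add_left, real_inner_smul_right, real_inner_smul_left,
      inner_eB, eB_apply, if_neg hij, if_neg hji]
    have : s * (s * 1) + r * (s * 0) + (s * (r * 0) + r * (r * 1)) = 2 := by
      rcases hs with rfl | rfl <;> rcases hr with rfl | rfl <;> norm_num
    congr 2
    rcases hs with rfl | rfl <;> rcases hr with rfl | rfl <;> norm_num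
  · intro h
    have := congrArg (fun v : EucB n => v i) h
    simp [eB_apply, hij] at this
    rcases hs with rfl | rfl <;> simp at this

lemma mem_DeltaB_cases (n : ℕ) (α : EucB n) : α ∈ DeltaB n ↔
    (∃ i j : Fin n, i ≠ j ∧ ∃ s r : ℝ, (s = 1 ∨ s = -1) ∧ (r = 1 ∨ r = -1) ∧
      α = s • eB n i + r • eB n j) ∨
    (∃ i : Fin n, ∃ s : ℝ, (s = 1 ∨ s = -1) ∧ α = s • eB n i) := by
  constructor
  · rintro (⟨i, j, hij, h⟩ | ⟨i, h⟩)
    · left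
      refine ⟨i, j, hij.ne, ?_⟩
      rcases h with rfl | rfl | rfl | rfl
      · exact ⟨1, 1, by simp, by simp, by module⟩
      · exact ⟨1, -1, by simp, by simp, by module⟩
      · exact ⟨-1, 1, by simp, by simp, by module⟩
      · exact ⟨-1, -1, by simp, by simp, by module⟩
    · right
      rcases h with rfl | rfl
      · exact ⟨i, 1, by simp, by module⟩
      · exact ⟨i, -1, by simp, by module⟩
  · rintro (⟨i, j, hij, s, r, hs, hr, rfl⟩ | ⟨i, s, hs, rfl⟩)
    · left
      rcases lt_or_gt_of_ne hij with h | h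
      · refine ⟨i, j, h, ?_⟩
        rcases hs with rfl | rfl <;> rcases hr with rfl | rfl <;> simp [sub_eq_add_neg]
      · refine ⟨j, i, h, ?_⟩
        rw [add_comm]
        rcases hs with rfl | rfl <;> rcases hr with rfl | rfl <;> simp [sub_eq_add_neg]
    · right
      refine ⟨i, ?_⟩
      rcases hs with rfl | rfl <;> simp

lemma refl_basis (n : ℕ) (α : EucB n) (hα : α ∈ DeltaB n) (l : Fin n) :
    ∃ m, sReflB n α (eB n l) = eB n m ∨ sReflB n α (eB n l) = -eB n m := by
  rcases (mem_DeltaB_cases n α).1 hα with ⟨i, j, hij, s, r, hs, hr, rfl⟩ | ⟨i, s, hs, rfl⟩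
  · rw [sReflB_long n i j hij s r hs hr]
    by_cases h1 : l = i
    · subst h1
      refine ⟨j, ?_⟩
      simp only [eB_apply, if_neg hij.symm, if_true]
      rcases hs with rfl | rfl <;> rcases hr with rfl | rfl <;>
        first | (left; module) | (right; module)
    by_cases h2 : l = j
    · subst h2
      refine ⟨i, ?_⟩
      simp only [eB_apply, if_neg hij, if_true]
      rcases hs with rfl | rfl <;> rcases hr with rfl | rfl <;>
        first | (left; module) | (right; module)
    · refine ⟨l, Or.inl ?_⟩
      simp [eB_apply, Ne.symm h1, Ne.symm h2]
  · rw [sReflB_short n i s hs]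
    refine ⟨l, ?_⟩
    by_cases h1 : l = i
    · subst h1
      right; simp only [eB_apply, if_true]; module
    · left; simp [eB_apply, Ne.symm h1]

lemma weyl_basis (n : ℕ) (θ : EucB n ≃ₗ[ℝ] EucB n) (h : θ ∈ WeylB n) :
    ∀ l, ∃ m, θ (eB n l) = eB n m ∨ θ (eB n l) = -eB n m := by
  have key : (∀ l, ∃ m, θ (eB n l) = eB n m ∨ θ (eB n l) = -eB n m) ∧
      (∀ l, ∃ m, θ⁻¹ (eB n l) = eB n m ∨ θ⁻¹ (eB n l) = -eB n m) := by
    unfold WeylB at h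
    have hmul : ∀ x y : EucB n ≃ₗ[ℝ] EucB n,
        (∀ l, ∃ m, x (eB n l) = eB n m ∨ x (eB n l) = -eB n m) →
        (∀ l, ∃ m, y (eB n l) = eB n m ∨ y (eB n l) = -eB n m) →
        (∀ l, ∃ m, (x * y) (eB n l) = eB n m ∨ (x * y) (eB n l) = -eB n m) := by
      intro x y hx hy l
      obtain ⟨m, hm⟩ := hy l
      obtain ⟨q, hq⟩ := hx m
      refine ⟨q, ?_⟩
      rw [LinearEquiv.mul_apply]
      rcases hm with hm | hm <;> rcases hq with hq | hq <;> simp [hm, hq]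
    induction h using Subgroup.closure_induction with
    | mem x hx =>
      obtain ⟨α, hα, rfl⟩ := hx
      rw [sReflB_invol]
      exact ⟨refl_basis n α hα, refl_basis n α hα⟩
    | one => exact ⟨fun l => ⟨l, Or.inl rfl⟩, fun l => ⟨l, Or.inl (by rw [inv_one]; rfl)⟩⟩
    | mul x y _ _ hx hy =>
      rw [mul_inv_rev]
      exact ⟨hmul _ _ hx.1 hy.1, hmul _ _ hy.2 hx.2⟩
    | inv x _ hx => rw [inv_inv]; exact hx.symm
  exact key.1

/-- The index type: fixed indices, pairs of moved indices, remaining indices. -/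
abbrev IdxB (ns k : ℕ) (T : Type) := (Fin ns ⊕ (Fin k ⊕ Fin k)) ⊕ T

/-- The target group. -/
abbrev TgtB (ns k : ℕ) :=
  (Multiplicative (Fin ns → ZMod 2) ⋊[permAction ns] Equiv.Perm (Fin ns)) ×
          Multiplicative (Fin k → ZMod 2)

/-- Sign character. -/
noncomputable def sgB (z : ZMod 2) : ℝ := if z = 0 then 1 else -1

lemma sgB_zero : sgB 0 = 1 := by simp [sgB]

lemma sgB_one : sgB 1 = -1 := by simp [sgB]

lemma zmod2_cases (a : ZMod 2) : a = 0 ∨ a = 1 := by revert a; decide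

lemma sgB_add (a b : ZMod 2) : sgB (a + b) = sgB a * sgB b := by
  have h : (1 + 1 : ZMod 2) = 0 := by decide
  rcases zmod2_cases a with rfl | rfl <;> rcases zmod2_cases b with rfl | rfl <;>
    simp [sgB_zero, sgB_one, h]

/-- The coordinate formula of the action. -/
noncomputable def actB {n ns k : ℕ} {T : Type} (D : IdxB ns k T ≃ Fin n) (δ : Fin k → ℝ)
    (g : TgtB ns k) (x : EucB n) : IdxB ns k T → ℝ
  | .inl (.inl a) => sgB (toAdd g.1.left a) * x (D (.inl (.inl (g.1.right⁻¹ a))))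
  | .inl (.inr (.inl p)) => if toAdd g.2 p = 0 then x (D (.inl (.inr (.inl p))))
      else -δ p * x (D (.inl (.inr (.inr p))))
  | .inl (.inr (.inr p)) => if toAdd g.2 p = 0 then x (D (.inl (.inr (.inr p))))
      else -δ p * x (D (.inl (.inr (.inl p))))
  | .inr t => x (D (.inr t))

/-- The action as a linear map. -/
noncomputable def linB {n ns k : ℕ} {T : Type} (D : IdxB ns k T ≃ Fin n) (δ : Fin k → ℝ)
    (g : TgtB ns k) : Module.End ℝ (EucB n) where
  toFun x := WithLp.toLp 2 (fun i => actB D δ g x (D.symm i))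
  map_add' x y := by
    ext i
    simp only [PiLp.add_apply]
    rcases D.symm i with (a | (p | p)) | t <;> simp only [actB, PiLp.add_apply] <;>
      (try split_ifs) <;> ring
  map_smul' c x := by
    ext i
    simp only [PiLp.smul_apply, smul_eq_mul, RingHom.id_apply]
    rcases D.symm i with (a | (p | p)) | t <;> simp only [actB, PiLp.smul_apply, smul_eq_mul] <;>
      (try split_ifs) <;> ring

lemma linB_apply {n ns k : ℕ} {T : Type} (D : IdxB ns k T ≃ Fin n) (δ : Fin k → ℝ)
    (g : TgtB ns k) (x : EucB n) (I : IdxB ns k T) :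
    linB D δ g x (D I) = actB D δ g x I := by
  simp [linB]

lemma ext_D {n ns k : ℕ} {T : Type} (D : IdxB ns k T ≃ Fin n) (x y : EucB n)
    (h : ∀ I, x (D I) = y (D I)) : x = y := by
  ext i
  have := h (D.symm i)
  simpa using this

/-- The action as a monoid hom into endomorphisms. -/
noncomputable def homEndB {n ns k : ℕ} {T : Type} (D : IdxB ns k T ≃ Fin n) (δ : Fin k → ℝ)
    (hδ : ∀ p, δ p = 1 ∨ δ p = -1) : TgtB ns k →* Module.End ℝ (EucB n) where
  toFun := linB D δ
  map_one' := by
    ext1 x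
    apply ext_D D
    intro I
    rw [linB_apply]
    rcases I with (a | (p | p)) | t <;> simp [actB, sgB_zero]
    rfl
  map_mul' g h := by
    ext1 x
    apply ext_D D
    intro I
    rw [Module.End.mul_apply, linB_apply, linB_apply]
    have hd : ∀ p, δ p * δ p = 1 := fun p => by rcases hδ p with h | h <;> rw [h] <;> norm_num
    have h11 : (1 + 1 : ZMod 2) = 0 := by decide
    rcases I with (a | (p | p)) | t
    · simp only [actB, linB_apply]
      change sgB (toAdd g.1.left a + toAdd h.1.left (g.1.right⁻¹ a)) *
        x (D (.inl (.inl ((g.1.right * h.1.right)⁻¹ a)))) = _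
      rw [sgB_add, mul_inv_rev, Equiv.Perm.mul_apply, mul_assoc]
    · simp only [actB, linB_apply, Prod.snd_mul, toAdd_mul, Pi.add_apply]
      rcases zmod2_cases (toAdd g.2 p) with e | e <;>
        rcases zmod2_cases (toAdd h.2 p) with e' | e' <;> simp [e, e', h11, ← mul_assoc, hd]
    · simp only [actB, linB_apply, Prod.snd_mul, toAdd_mul, Pi.add_apply]
      rcases zmod2_cases (toAdd g.2 p) with e | e <;>
        rcases zmod2_cases (toAdd h.2 p) with e' | e' <;> simp [e, e', h11, ← mul_assoc, hd]
    · simp only [actB, linB_apply]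

/-- The action as a group hom. -/
noncomputable def homB {n ns k : ℕ} {T : Type} (D : IdxB ns k T ≃ Fin n) (δ : Fin k → ℝ)
    (hδ : ∀ p, δ p = 1 ∨ δ p = -1) : TgtB ns k →* (EucB n ≃ₗ[ℝ] EucB n) :=
  (LinearMap.GeneralLinearGroup.generalLinearEquiv ℝ (EucB n)).toMonoidHom.comp
    (homEndB D δ hδ).toHomUnits

lemma homB_apply {n ns k : ℕ} {T : Type} (D : IdxB ns k T ≃ Fin n) (δ : Fin k → ℝ)
    (hδ : ∀ p, δ p = 1 ∨ δ p = -1) (g : TgtB ns k) (x : EucB n) (I : IdxB ns k T) :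
    homB D δ hδ g x (D I) = actB D δ g x I :=
  linB_apply D δ g x I

lemma eB_D {n ns k : ℕ} {T : Type} (D : IdxB ns k T ≃ Fin n) (I J : IdxB ns k T) [Decidable (J = I)] :
    eB n (D I) (D J) = if J = I then 1 else 0 := by
  rw [eB_apply]; simp

open Classical in
lemma homB_inj {n ns k : ℕ} {T : Type} (D : IdxB ns k T ≃ Fin n) (δ : Fin k → ℝ)
    (hδ : ∀ p, δ p = 1 ∨ δ p = -1) : Function.Injective (homB D δ hδ) := by
  rw [injective_iff_map_eq_one]
  rintro ⟨⟨b, π⟩, c⟩ hg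
  have key : ∀ x I, actB D δ ((⟨b, π⟩, c) : TgtB ns k) x I = x (D I) := by
    intro x I
    rw [← homB_apply D δ hδ, hg]; rfl
  have h1 : π = 1 := by
    rw [← inv_eq_one]
    ext1 a
    have := key (eB n (D (.inl (.inl a)))) (.inl (.inl a))
    simp only [actB, eB_D] at this
    by_contra hne
    simp at hne
    simp [hne] at this
  subst h1
  have h2 : b = 1 := by
    apply toAdd.injective
    ext1 a
    have := key (eB n (D (.inl (.inl a)))) (.inl (.inl a))
    simp only [actB, eB_D] at this
    rcases zmod2_cases (toAdd b a) with e | e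
    · rw [e]; rfl
    · rw [e] at this; norm_num [sgB_one] at this
  have h3 : c = 1 := by
    apply toAdd.injective
    ext1 p
    have := key (eB n (D (.inl (.inr (.inl p))))) (.inl (.inr (.inl p)))
    simp only [actB, eB_D] at this
    rcases zmod2_cases (toAdd c p) with e | e
    · rw [e]; rfl
    · rw [e, if_neg (by decide), if_neg (by simp)] at this
      simp at this
  subst h2 h3
  rfl

lemma subgroup_zmod2 {m : ℕ} (H : Subgroup (Multiplicative (Fin m → ZMod 2)))
    (h : ∀ i, ofAdd (Pi.single i 1) ∈ H) : ∀ b, b ∈ H := by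
  intro b
  have hb : b = ∏ i, ofAdd (Pi.single i (toAdd b i)) := by
    apply toAdd.injective
    rw [toAdd_prod]
    simp [Finset.univ_sum_single]
  rw [hb]
  refine Subgroup.prod_mem _ fun i _ => ?_
  rcases zmod2_cases (toAdd b i) with e | e
  · rw [e, Pi.single_zero]; exact H.one_mem
  · rw [e]; exact h i

end HelperLemmas

section CoreLemma

open Classical in
/-- Reflection in a short imaginary root. -/
lemma homB_short {n ns k : ℕ} {T : Type} (D : IdxB ns k T ≃ Fin n) (δ : Fin k → ℝ)
    (hδ : ∀ p, δ p = 1 ∨ δ p = -1) (a : Fin ns) (s : ℝ) (hs : s = 1 ∨ s = -1) :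
    homB D δ hδ (⟨ofAdd (Pi.single a 1), 1⟩, 1) = sReflB n (s • eB n (D (.inl (.inl a)))) := by
  ext1 x
  apply ext_D D
  intro I
  rw [homB_apply, sReflB_short n _ s hs]
  simp only [PiLp.sub_apply, PiLp.smul_apply, smul_eq_mul, eB_D]
  rcases I with (a' | (p | p)) | t
  · simp only [actB, inv_one, Equiv.Perm.one_apply, toAdd_ofAdd]
    by_cases h : a' = a
    · subst h; simp [sgB_one]; ring
    · simp [h, sgB_zero]
  · simp [actB]
  · simp [actB]
  · simp [actB]

open Classical in
/-- Reflection in a long imaginary root, both indices fixed. -/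
lemma homB_long {n ns k : ℕ} {T : Type} (D : IdxB ns k T ≃ Fin n) (δ : Fin k → ℝ)
    (hδ : ∀ p, δ p = 1 ∨ δ p = -1) (a b : Fin ns) (hab : a ≠ b) (s r : ℝ)
    (hs : s = 1 ∨ s = -1) (hr : r = 1 ∨ r = -1) (z : ZMod 2) (hz : sgB z = - (s * r)) :
    homB D δ hδ (⟨ofAdd (Pi.single a z + Pi.single b z), Equiv.swap a b⟩, 1) =
      sReflB n (s • eB n (D (.inl (.inl a))) + r • eB n (D (.inl (.inl b)))) := by
  have hne : D (.inl (.inl a)) ≠ D (.inl (.inl b)) := by simpa using hab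
  ext1 x
  apply ext_D D
  intro I
  rw [homB_apply, sReflB_long n _ _ hne s r hs hr]
  simp only [PiLp.sub_apply, PiLp.add_apply, PiLp.smul_apply, smul_eq_mul, eB_D]
  have hss : s * s = 1 := by rcases hs with rfl | rfl <;> norm_num
  have hrr : r * r = 1 := by rcases hr with rfl | rfl <;> norm_num
  rcases I with (a' | (p | p)) | t
  · simp only [actB, Equiv.swap_inv, toAdd_ofAdd]
    by_cases h : a' = a
    · subst h
      simp only [Equiv.swap_apply_left, Pi.add_apply, Pi.single_eq_same,
        Pi.single_eq_of_ne hab, add_zero, hz, Sum.inl.injEq, if_neg hab, if_true]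
      linear_combination (x (D (.inl (.inl a')))) * hss
    · by_cases h' : a' = b
      · subst h'
        simp only [Equiv.swap_apply_right, Pi.add_apply, Pi.single_eq_same,
          Pi.single_eq_of_ne hab.symm, zero_add, hz, Sum.inl.injEq, if_neg hab.symm, if_true]
        linear_combination (x (D (.inl (.inl a')))) * hrr
      · rw [Equiv.swap_apply_of_ne_of_ne h h']
        simp [h, h', sgB_zero]
  · simp [actB]
  · simp [actB]
  · simp [actB]

open Classical in
/-- Reflection in a long imaginary root, from a pair of moved indices. -/
lemma homB_pair {n ns k : ℕ} {T : Type} (D : IdxB ns k T ≃ Fin n) (δ : Fin k → ℝ)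
    (hδ : ∀ p, δ p = 1 ∨ δ p = -1) (p : Fin k) (s r : ℝ)
    (hs : s = 1 ∨ s = -1) (hr : r = 1 ∨ r = -1) (hsr : s = δ p * r) :
    homB D δ hδ (1, ofAdd (Pi.single p 1)) =
      sReflB n (s • eB n (D (.inl (.inr (.inl p)))) + r • eB n (D (.inl (.inr (.inr p))))) := by
  have hne : D (.inl (.inr (.inl p))) ≠ D (.inl (.inr (.inr p))) := by simp
  ext1 x
  apply ext_D D
  intro I
  rw [homB_apply, sReflB_long n _ _ hne s r hs hr]
  simp only [PiLp.sub_apply, PiLp.add_apply, PiLp.smul_apply, smul_eq_mul, eB_D]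
  have hss : s * s = 1 := by rcases hs with rfl | rfl <;> norm_num
  have hrr : r * r = 1 := by rcases hr with rfl | rfl <;> norm_num
  have hd : δ p = s * r := by rw [hsr, mul_assoc, hrr, mul_one]
  rcases I with (a' | (q | q)) | t
  · simp [actB, sgB_zero]
    rfl
  · simp only [actB, toAdd_ofAdd]
    by_cases h : q = p
    · subst h
      simp [hd]
      linear_combination (x (D (.inl (.inr (.inl q))))) * hss
    · simp [h]
  · simp only [actB, toAdd_ofAdd]
    by_cases h : q = p
    · subst h
      simp [hd]
      linear_combination (x (D (.inl (.inr (.inr q))))) * hrr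
    · simp [h]
  · simp [actB]

open Classical in
lemma core_iso {n ns k : ℕ} {T : Type} (D : IdxB ns k T ≃ Fin n) (δ : Fin k → ℝ)
    (hδ : ∀ p, δ p = 1 ∨ δ p = -1) (Θ : EucB n →ₗ[ℝ] EucB n)
    (h1 : ∀ a, Θ (eB n (D (.inl (.inl a)))) = eB n (D (.inl (.inl a))))
    (h2 : ∀ p, Θ (eB n (D (.inl (.inr (.inl p))))) = δ p • eB n (D (.inl (.inr (.inr p)))))
    (h3 : ∀ p, Θ (eB n (D (.inl (.inr (.inr p))))) = δ p • eB n (D (.inl (.inr (.inl p)))))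
    (h4 : ∀ t, Θ (eB n (D (.inr t))) = - eB n (D (.inr t))) :
    Nonempty ((Subgroup.closure {g : EucB n ≃ₗ[ℝ] EucB n |
          ∃ α ∈ DeltaB n, Θ α = α ∧ g = sReflB n α}) ≃* TgtB ns k) := by
  have hrange : Subgroup.closure {g : EucB n ≃ₗ[ℝ] EucB n |
          ∃ α ∈ DeltaB n, Θ α = α ∧ g = sReflB n α} = (homB D δ hδ).range := by
    apply le_antisymm
    · rw [Subgroup.closure_le]
      rintro g ⟨α, hα, hfix, rfl⟩
      rcases (mem_DeltaB_cases n α).1 hα with ⟨i, j, hij, s, r, hs, hr, rfl⟩ | ⟨i, s, hs, rfl⟩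
      · obtain ⟨I, rfl⟩ := D.surjective i
        obtain ⟨J, rfl⟩ := D.surjective j
        have hIJ : I ≠ J := fun h => hij (by rw [h])
        have hs0 : s ≠ 0 := by rcases hs with rfl | rfl <;> norm_num
        have hr0 : r ≠ 0 := by rcases hr with rfl | rfl <;> norm_num
        have hd0 : ∀ p, δ p ≠ 0 := fun p => by rcases hδ p with h | h <;> rw [h] <;> norm_num
        have co : ∀ K, (Θ (s • eB n (D I) + r • eB n (D J))) (D K) =
            (s • eB n (D I) + r • eB n (D J)) (D K) := fun K => by rw [hfix]
        simp only [map_add, map_smul] at co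
        have cI := co I
        have cJ := co J
        clear co
        have pairCase : ∀ p q, ∀ s r : ℝ, (s = 1 ∨ s = -1) → (r = 1 ∨ r = -1) →
            r * (δ q * if p = q then 1 else 0) = s →
            sReflB n (s • eB n (D (.inl (.inr (.inl p)))) +
              r • eB n (D (.inl (.inr (.inr q))))) ∈ (homB D δ hδ).range := by
          intro p q s r hs hr h
          by_cases hpq : p = q
          · subst hpq
            refine ⟨_, homB_pair D δ hδ p s r hs hr ?_⟩
            rw [← h]; simp [mul_comm]
          · simp [hpq] at h
            rcases hs with rfl | rfl <;> norm_num at h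
        rcases I with (a | (p | p)) | t
        · rcases J with (b | (q | q)) | u
          · have hab : a ≠ b := fun h => hIJ (by rw [h])
            rcases hs with rfl | rfl <;> rcases hr with rfl | rfl
            · exact ⟨_, homB_long D δ hδ a b hab _ _ (by simp) (by simp) 1 (by simp [sgB_one])⟩
            · exact ⟨_, homB_long D δ hδ a b hab _ _ (by simp) (by simp) 0 (by simp [sgB_zero])⟩
            · exact ⟨_, homB_long D δ hδ a b hab _ _ (by simp) (by simp) 0 (by simp [sgB_zero])⟩
            · exact ⟨_, homB_long D δ hδ a b hab _ _ (by simp) (by simp) 1 (by simp [sgB_one])⟩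
          · simp [h1, h2, eB_D] at cJ
            exact absurd cJ.symm hr0
          · simp [h1, h3, eB_D] at cJ
            exact absurd cJ.symm hr0
          · simp [h1, h4, eB_D] at cJ
            exact absurd (by linarith) hr0
        · rcases J with (b | (q | q)) | u
          · simp [h1, h2, eB_D] at cI
            exact absurd cI.symm hs0
          · have hpq : p ≠ q := fun h => hIJ (by rw [h])
            simp [h2, eB_D, hpq] at cI
            exact absurd cI.symm hs0
          · refine pairCase p q s r hs hr ?_
            simpa [h2, h3, eB_D] using cI
          · simp [h2, h4, eB_D] at cJ
            exact absurd (by linarith) hr0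
        · rcases J with (b | (q | q)) | u
          · simp [h1, h3, eB_D] at cI
            exact absurd cI.symm hs0
          · rw [add_comm]
            refine pairCase q p r s hr hs ?_
            simpa [h2, h3, eB_D] using cJ
          · have hpq : p ≠ q := fun h => hIJ (by rw [h])
            simp [h3, eB_D, hpq] at cI
            exact absurd cI.symm hs0
          · simp [h3, h4, eB_D] at cJ
            exact absurd (by linarith) hr0
        · have hJ : eB n (D J) (D (.inr t)) = 0 := by rw [eB_D, if_neg hIJ]
          have hJ' : Θ (eB n (D J)) (D (.inr t)) = 0 := by
            rcases J with (b | (q | q)) | u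
            · rw [h1]; exact hJ
            · rw [h2]; simp [eB_D]
            · rw [h3]; simp [eB_D]
            · rw [h4]; simp only [PiLp.neg_apply, hJ, neg_zero]
          simp [h4, hJ, hJ', eB_D] at cI
          exact absurd (by linarith) hs0
      · obtain ⟨I, rfl⟩ := D.surjective i
        have hs0 : s ≠ 0 := by rcases hs with rfl | rfl <;> norm_num
        have co : (Θ (s • eB n (D I))) (D I) = (s • eB n (D I)) (D I) := by rw [hfix]
        rw [map_smul] at co
        rcases I with (a | (p | p)) | t
        · exact ⟨_, homB_short D δ hδ a s hs⟩
        · simp [h2, eB_D] at co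
          exact absurd co.symm hs0
        · simp [h3, eB_D] at co
          exact absurd co.symm hs0
        · simp [h4, eB_D] at co
          exact absurd (by linarith) hs0
    · rintro _ ⟨⟨⟨b, π⟩, c⟩, rfl⟩
      set H := Subgroup.closure {g : EucB n ≃ₗ[ℝ] EucB n |
          ∃ α ∈ DeltaB n, Θ α = α ∧ g = sReflB n α} with hH
      let f1 : Multiplicative (Fin ns → ZMod 2) →* TgtB ns k :=
        (MonoidHom.inl _ _).comp SemidirectProduct.inl
      let f2 : Equiv.Perm (Fin ns) →* TgtB ns k :=
        (MonoidHom.inl _ _).comp SemidirectProduct.inr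
      let f3 : Multiplicative (Fin k → ZMod 2) →* TgtB ns k := MonoidHom.inr _ _
      have hdec : ((⟨b, π⟩, c) : TgtB ns k) = f1 b * f2 π * f3 c := by
        apply Prod.ext
        · change _ = SemidirectProduct.inl b * SemidirectProduct.inr π * 1
          rw [mul_one, SemidirectProduct.mk_eq_inl_mul_inr]
        · change c = 1 * 1 * c
          simp
      have m1 : ∀ b, homB D δ hδ (f1 b) ∈ H := by
        refine subgroup_zmod2 (H.comap ((homB D δ hδ).comp f1)) fun a => ?_
        refine Subgroup.subset_closure ⟨(1 : ℝ) • eB n (D (.inl (.inl a))), ?_, ?_, ?_⟩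
        · exact (mem_DeltaB_cases n _).2 (Or.inr ⟨_, 1, Or.inl rfl, rfl⟩)
        · rw [map_smul, h1]
        · exact homB_short D δ hδ a 1 (Or.inl rfl)
      have m3 : ∀ c, homB D δ hδ (f3 c) ∈ H := by
        refine subgroup_zmod2 (H.comap ((homB D δ hδ).comp f3)) fun p => ?_
        refine Subgroup.subset_closure ⟨δ p • eB n (D (.inl (.inr (.inl p)))) +
          (1 : ℝ) • eB n (D (.inl (.inr (.inr p)))), ?_, ?_, ?_⟩
        · exact (mem_DeltaB_cases n _).2
            (Or.inl ⟨_, _, by simp, _, _, hδ p, Or.inl rfl, rfl⟩)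
        · rw [map_add, map_smul, map_smul, h2, h3]
          rcases hδ p with h | h <;> rw [h] <;> module
        · exact homB_pair D δ hδ p _ _ (hδ p) (Or.inl rfl) (by simp)
      have m2 : ∀ π, homB D δ hδ (f2 π) ∈ H := by
        intro π
        induction π using Equiv.Perm.swap_induction_on with
        | one => rw [map_one, map_one]; exact H.one_mem
        | swap_mul σ a b hab ih =>
          rw [map_mul, map_mul]
          refine H.mul_mem ?_ ih
          refine Subgroup.subset_closure ⟨(1 : ℝ) • eB n (D (.inl (.inl a))) +
            (-1 : ℝ) • eB n (D (.inl (.inl b))), ?_, ?_, ?_⟩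
          · exact (mem_DeltaB_cases n _).2
              (Or.inl ⟨_, _, by simpa using hab, _, _, Or.inl rfl, Or.inr rfl, rfl⟩)
          · rw [map_add, map_smul, map_smul, h1, h1]
          · rw [← homB_long D δ hδ a b hab 1 (-1) (Or.inl rfl) (Or.inr rfl) 0 (by simp [sgB_zero])]
            simp only [Pi.single_zero, add_zero]
            rfl
      rw [hdec, map_mul, map_mul]
      exact H.mul_mem (H.mul_mem (m1 b) (m2 π)) (m3 c)
  rw [hrange]
  exact ⟨(MonoidHom.ofInjective (homB_inj D δ hδ)).symm⟩

end CoreLemma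

section FinalAssembly

/-- Index decomposition for a signed involution. -/
lemma signed_iso {n : ℕ} (σ : Fin n → Fin n) (ε : Fin n → ℝ)
    (hε : ∀ i, ε i = 1 ∨ ε i = -1) (hσ : ∀ i, σ (σ i) = i) (hεσ : ∀ i, ε (σ i) = ε i)
    (Θ : EucB n →ₗ[ℝ] EucB n) (hΘ : ∀ i, Θ (eB n i) = ε i • eB n (σ i)) (m k : ℕ)
    (hm : Nat.card {i // σ i = i ∧ ε i = 1} = m) (hk : Nat.card {i // i < σ i} = k) :
    Nonempty ((Subgroup.closure {g : EucB n ≃ₗ[ℝ] EucB n |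
          ∃ α ∈ DeltaB n, Θ α = α ∧ g = sReflB n α}) ≃* TgtB m k) := by
  let f := (Finite.equivFinOfCardEq hm).symm
  let g := (Finite.equivFinOfCardEq hk).symm
  let T := {i // σ i = i ∧ ε i = -1}
  let D0 : IdxB m k T → Fin n :=
    Sum.elim (Sum.elim (fun a => (f a).1) (Sum.elim (fun p => (g p).1) (fun p => σ (g p).1)))
      (fun t => t.1)
  have finj : ∀ a b, (f a).1 = (f b).1 → a = b := fun a b h => f.injective (Subtype.ext h)
  have ginj : ∀ a b, (g a).1 = (g b).1 → a = b := fun a b h => g.injective (Subtype.ext h)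
  have hf : ∀ a, σ (f a).1 = (f a).1 ∧ ε (f a).1 = 1 := fun a => (f a).2
  have hg : ∀ p, (g p).1 < σ (g p).1 := fun p => (g p).2
  have hT : ∀ t : T, σ t.1 = t.1 ∧ ε t.1 = -1 := fun t => t.2
  have hD : Function.Bijective D0 := by
    constructor
    · rintro ((a | (p | p)) | t) ((b | (q | q)) | u) h <;> simp only [D0, Sum.elim_inl, Sum.elim_inr] at h
      · rw [finj _ _ h]
      · have := hf a; have := hg q; grind
      · have := hf a; have := hg q; grind
      · have := hf a; have := hT u; rw [h] at *; norm_num [this.2] at *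
      · have := hf b; have := hg p; grind
      · rw [ginj _ _ h]
      · have := hg p; have := hg q; have := hσ (g q).1; grind
      · have := hg p; have := hT u; grind
      · have := hf b; have := hg p; grind
      · have := hg p; have := hg q; have := hσ (g p).1; grind
      · have := congrArg σ h; rw [hσ, hσ] at this; rw [ginj _ _ this]
      · have := hg p; have := hT u; grind
      · have := hf b; have := hT t; rw [h] at *; norm_num [this.2] at *
      · have := hg q; have := hT t; grind
      · have := hg q; have := hT t; grind
      · rw [Subtype.ext h]
    · intro i
      rcases lt_trichotomy i (σ i) with h | h | h
      · exact ⟨.inl (.inr (.inl (g.symm ⟨i, h⟩))), by simp [D0]⟩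
      · rcases hε i with e | e
        · exact ⟨.inl (.inl (f.symm ⟨i, h.symm, e⟩)), by simp [D0]⟩
        · exact ⟨.inr ⟨i, h.symm, e⟩, by simp [D0]⟩
      · exact ⟨.inl (.inr (.inr (g.symm ⟨σ i, by rw [hσ]; exact h⟩))), by simp [D0, hσ]⟩
  refine core_iso (Equiv.ofBijective D0 hD) (fun p => ε (g p).1) (fun p => hε _) Θ ?_ ?_ ?_ ?_
  · intro a
    change Θ (eB n (f a).1) = eB n (f a).1
    rw [hΘ, (hf a).1, (hf a).2, one_smul]
  · intro p
    exact hΘ _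
  · intro p
    change Θ (eB n (σ (g p).1)) = ε (g p).1 • eB n (g p).1
    rw [hΘ, hσ, hεσ]
  · intro t
    change Θ (eB n t.1) = - eB n t.1
    rw [hΘ, (hT t).1, (hT t).2, neg_one_smul]

lemma smul_eB_inj {n : ℕ} {i j : Fin n} {s r : ℝ} (hs : s ≠ 0) (h : s • eB n i = r • eB n j) :
    i = j ∧ s = r := by
  have h1 := congrArg (fun v : EucB n => v i) h
  simp only [PiLp.smul_apply, eB_apply, smul_eq_mul, if_true, mul_one] at h1
  by_cases hij : i = j
  · subst hij; simpa using h1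
  · simp [hij] at h1; exact absurd h1 hs

end FinalAssembly

/-- Let `θ ∈ W(Bₙ)` be an involution, with `n_s` indices `i` such that `θ eᵢ = eᵢ`,
`n_r` indices with `θ eᵢ = −eᵢ`, and `2k` indices with `θ eᵢ ≠ ±eᵢ`.  Then the subgroup
of `W` generated by the reflections in the imaginary roots (`θα = α`) is isomorphic to
`W(B_{n_s}) × W(A₁)^k`, and the subgroup generated by the reflections in the real roots
(`θα = −α`) is isomorphic to `W(B_{n_r}) × W(A₁)^k`. -/
theorem imaginary_real_weyl_subgroups (n : ℕ) (hn : 0 < n)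
    (θ : EucB n ≃ₗ[ℝ] EucB n) (hθW : θ ∈ WeylB n) (hθ2 : θ * θ = 1)
    (ns nr k : ℕ)
    (hns : ns = Nat.card {i : Fin n // θ (eB n i) = eB n i})
    (hnr : nr = Nat.card {i : Fin n // θ (eB n i) = -eB n i})
    (hk : Nat.card {i : Fin n // θ (eB n i) ≠ eB n i ∧ θ (eB n i) ≠ -eB n i} = 2 * k) :
    Nonempty
      ((Subgroup.closure {g : EucB n ≃ₗ[ℝ] EucB n |
          ∃ α ∈ DeltaB n, θ α = α ∧ g = sReflB n α}) ≃*
        (Multiplicative (Fin ns → ZMod 2) ⋊[permAction ns] Equiv.Perm (Fin ns)) ×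
          Multiplicative (Fin k → ZMod 2)) ∧
    Nonempty
      ((Subgroup.closure {g : EucB n ≃ₗ[ℝ] EucB n |
          ∃ α ∈ DeltaB n, θ α = -α ∧ g = sReflB n α}) ≃*
        (Multiplicative (Fin nr → ZMod 2) ⋊[permAction nr] Equiv.Perm (Fin nr)) ×
          Multiplicative (Fin k → ZMod 2)) := by
  have hb := weyl_basis n θ hθW
  have hb' : ∀ i, ∃ j, ∃ s : ℝ, (s = 1 ∨ s = -1) ∧ θ (eB n i) = s • eB n j := by
    intro i
    obtain ⟨j, h | h⟩ := hb i
    · exact ⟨j, 1, Or.inl rfl, by rw [h, one_smul]⟩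
    · exact ⟨j, -1, Or.inr rfl, by rw [h, neg_one_smul]⟩
  choose σ ε hε hθ using hb'
  have hε0 : ∀ i, ε i ≠ 0 := fun i => by rcases hε i with h | h <;> rw [h] <;> norm_num
  have hinv : ∀ i, σ (σ i) = i ∧ ε (σ i) = ε i := by
    intro i
    have h1 : θ (θ (eB n i)) = eB n i := by
      rw [← LinearEquiv.mul_apply, hθ2]; rfl
    rw [hθ, map_smul, hθ, smul_smul] at h1
    have h2 := smul_eB_inj (r := 1) (mul_ne_zero (hε0 _) (hε0 _)) (by rw [h1, one_smul])
    refine ⟨h2.1, ?_⟩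
    have h3 := h2.2
    rcases hε i with h | h <;> rw [h] at h3 ⊢ <;> linarith
  have hfix : ∀ i, θ (eB n i) = eB n i ↔ σ i = i ∧ ε i = 1 := by
    intro i
    rw [hθ]
    constructor
    · intro h
      exact smul_eB_inj (hε0 i) (by rw [h, one_smul])
    · rintro ⟨h1, h2⟩
      rw [h1, h2, one_smul]
  have hneg : ∀ i, θ (eB n i) = -eB n i ↔ σ i = i ∧ ε i = -1 := by
    intro i
    rw [hθ]
    constructor
    · intro h
      exact smul_eB_inj (hε0 i) (by rw [h, neg_one_smul])
    · rintro ⟨h1, h2⟩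
      rw [h1, h2, neg_one_smul]
  have hmov : ∀ i, (θ (eB n i) ≠ eB n i ∧ θ (eB n i) ≠ -eB n i) ↔ (i < σ i ∨ σ i < i) := by
    intro i
    rw [Ne, Ne, hfix, hneg, ← ne_iff_lt_or_gt]
    rcases hε i with h | h <;> constructor <;> intro h' <;> grind
  have hkk : Nat.card {i // i < σ i} = k := by
    have e1 : {i // θ (eB n i) ≠ eB n i ∧ θ (eB n i) ≠ -eB n i} ≃ {i // i < σ i ∨ σ i < i} :=
      Equiv.subtypeEquivRight hmov
    have e2 : {i // i < σ i ∨ σ i < i} ≃ {i // i < σ i} ⊕ {i // σ i < i} :=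
      subtypeOrEquiv _ _ (by
        rw [Pi.disjoint_iff]; intro i; rw [Prop.disjoint_iff]; grind)
    have e3 : {i // i < σ i} ≃ {i // σ i < i} :=
      { toFun := fun i => ⟨σ i.1, by rw [(hinv _).1]; exact i.2⟩
        invFun := fun i => ⟨σ i.1, by rw [(hinv _).1]; exact i.2⟩
        left_inv := fun i => Subtype.ext (hinv _).1
        right_inv := fun i => Subtype.ext (hinv _).1 }
    rw [Nat.card_congr e1, Nat.card_congr e2, Nat.card_sum, ← Nat.card_congr e3] at hk
    omega
  constructor
  · refine signed_iso σ ε hε (fun i => (hinv i).1) (fun i => (hinv i).2) θ.toLinearMap hθ ns k ?_ hkk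
    rw [hns]
    exact (Nat.card_congr (Equiv.subtypeEquivRight hfix)).symm
  · have := signed_iso σ (fun i => - ε i) (fun i => by rcases hε i with h | h <;> simp [h])
      (fun i => (hinv i).1) (fun i => by simp [(hinv i).2]) (-θ.toLinearMap)
      (fun i => by simp [hθ]) nr k (by
        rw [hnr]
        refine Nat.card_congr (Equiv.subtypeEquivRight fun i => ?_)
        rw [hneg, neg_eq_iff_eq_neg]) hkk
    have hset : {g : EucB n ≃ₗ[ℝ] EucB n | ∃ α ∈ DeltaB n, θ α = -α ∧ g = sReflB n α} =
        {g | ∃ α ∈ DeltaB n, (-θ.toLinearMap) α = α ∧ g = sReflB n α} := by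
      ext g
      simp only [Set.mem_setOf_eq, LinearMap.neg_apply, LinearEquiv.coe_coe, neg_eq_iff_eq_neg]
    rw [hset]
    exact this
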